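/- (Lemma 2) Let y* = (x*, λ*, v*) ∈ Ω. Suppose there exist α > 0, β > 0, γ > 0 such that ⟨p(x) − p(x*), x − x*⟩ ≥ α‖x − x*‖² for all x ∈ ℝ₊ⁿ, ⟨c(λ) − c(λ*), λ − λ*⟩ ≤ −β‖λ − λ*‖² for all λ ∈ ℝ₊ⁿ, and ⟨r(v) − r(v*), v − v*⟩ ≥ γ‖v − v*‖² for all v ∈ ℝ₊ᵐ. Then with δ = min{α, β, γ} > 0, for all y ∈ Ω one has ⟨g(y) − g(y*), y − y*⟩ ≤ −δ‖y − y*‖². -/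

import Mathlib

open Matrix Filter
open scoped BigOperators

noncomputable section

/-- Vectors in ℝ^k. -/
abbrev Vec (k : ℕ) := Fin k → ℝ

/-- Standard Euclidean inner product on ℝ^k. -/
def ip {k : ℕ} (u v : Vec k) : ℝ := ∑ i, u i * v i

/-- Standard Euclidean norm on ℝ^k. -/
def nrm {k : ℕ} (u : Vec k) : ℝ := Real.sqrt (ip u u)

/-- The space ℝⁿ × ℝⁿ × ℝᵐ of triples y = (x, λ, v). -/
abbrev Triple (n m : ℕ) := Vec n × Vec n × Vec m

/-- Euclidean inner product on the triple space. -/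
def ipT {n m : ℕ} (y z : Triple n m) : ℝ :=
  ip y.1 z.1 + ip y.2.1 z.2.1 + ip y.2.2 z.2.2

/-- Euclidean norm on the triple space. -/
def nrmT {n m : ℕ} (y : Triple n m) : ℝ := Real.sqrt (ipT y y)

/-- Ω = ℝ₊ⁿ × ℝ₊ⁿ × ℝ₊ᵐ. -/
def Om (n m : ℕ) : Set (Triple n m) :=
  {y | (∀ j, 0 ≤ y.1 j) ∧ (∀ j, 0 ≤ y.2.1 j) ∧ (∀ i, 0 ≤ y.2.2 i)}

/-- The operator g(x, λ, v) = ((I − A)ᵀλ − p(x) − Bᵀv, c(λ) − (I − A)x, Bx − r(v)). -/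
def gOp {n m : ℕ} (A : Matrix (Fin n) (Fin n) ℝ) (B : Matrix (Fin m) (Fin n) ℝ)
    (p c : Vec n → Vec n) (r : Vec m → Vec m) (y : Triple n m) : Triple n m :=
  ((1 - A)ᵀ *ᵥ y.2.1 - p y.1 - Bᵀ *ᵥ y.2.2,
   c y.2.1 - (1 - A) *ᵥ y.1,
   B *ᵥ y.1 - r y.2.2)

/-- P_Ω : componentwise positive part (Euclidean projection onto Ω). -/
def projOm {n m : ℕ} (y : Triple n m) : Triple n m :=
  (fun j => max (y.1 j) 0, fun j => max (y.2.1 j) 0, fun i => max (y.2.2 i) 0)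

theorem ip_self_nonneg7 {k : ℕ} (u : Vec k) : 0 ≤ ip u u :=
  Finset.sum_nonneg fun i _ => mul_self_nonneg (u i)

theorem ip_eq_dot7 {k : ℕ} (u v : Vec k) : ip u v = u ⬝ᵥ v := rfl

theorem nrm_sq7 {k : ℕ} (u : Vec k) : nrm u ^ 2 = ip u u :=
  Real.sq_sqrt (ip_self_nonneg7 u)

theorem nrmT_sq7 {n m : ℕ} (y : Triple n m) : nrmT y ^ 2 = ipT y y :=
  Real.sq_sqrt (add_nonneg (add_nonneg (ip_self_nonneg7 _) (ip_self_nonneg7 _))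
    (ip_self_nonneg7 _))

theorem ip_transpose7 {n m : ℕ} (M : Matrix (Fin m) (Fin n) ℝ) (u : Vec m) (w : Vec n) :
    (Mᵀ *ᵥ u) ⬝ᵥ w = (M *ᵥ w) ⬝ᵥ u := by
  rw [Matrix.mulVec_transpose, ← Matrix.dotProduct_mulVec, dotProduct_comm]

theorem key7 {n m : ℕ} (A : Matrix (Fin n) (Fin n) ℝ) (B : Matrix (Fin m) (Fin n) ℝ)
    (p c : Vec n → Vec n) (r : Vec m → Vec m) (x l xs ls : Vec n) (v vs : Vec m) :
    ipT (gOp A B p c r (x, l, v) - gOp A B p c r (xs, ls, vs)) ((x, l, v) - (xs, ls, vs)) =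
      - ip (p x - p xs) (x - xs) + ip (c l - c ls) (l - ls) - ip (r v - r vs) (v - vs) := by
  have e1 : (gOp A B p c r (x, l, v) - gOp A B p c r (xs, ls, vs)) =
      ((1 - A)ᵀ *ᵥ (l - ls) - (p x - p xs) - Bᵀ *ᵥ (v - vs),
       (c l - c ls) - (1 - A) *ᵥ (x - xs), B *ᵥ (x - xs) - (r v - r vs)) := by
    simp only [gOp, Prod.mk_sub_mk, Matrix.mulVec_sub]
    refine Prod.ext ?_ (Prod.ext ?_ ?_) <;> dsimp only <;> abel
  rw [e1]
  simp only [ipT, Prod.mk_sub_mk, ip_eq_dot7]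
  generalize x - xs = a
  generalize l - ls = b
  generalize v - vs = d
  simp only [sub_dotProduct _ _ a, sub_dotProduct _ _ b, sub_dotProduct _ _ d, ip_transpose7]
  ring

/-- Lemma 2: if p, c, r are strongly monotone at the equilibrium
y* = (x*, λ*, v*), then g is strongly monotone at y* with modulus δ = min{α, β, γ}. -/
theorem stmt7 {n m : ℕ} (hn : 0 < n) (hm : 0 < m)
    (A : Matrix (Fin n) (Fin n) ℝ) (B : Matrix (Fin m) (Fin n) ℝ)
    (p c : Vec n → Vec n) (r : Vec m → Vec m)
    (xs lams : Vec n) (vs : Vec m) (hOm : (xs, lams, vs) ∈ Om n m)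
    (α β γ : ℝ) (hα : 0 < α) (hβ : 0 < β) (hγ : 0 < γ)
    (hp : ∀ x : Vec n, (∀ j, 0 ≤ x j) →
      α * nrm (x - xs) ^ 2 ≤ ip (p x - p xs) (x - xs))
    (hc : ∀ l : Vec n, (∀ j, 0 ≤ l j) →
      ip (c l - c lams) (l - lams) ≤ -β * nrm (l - lams) ^ 2)
    (hr : ∀ v : Vec m, (∀ i, 0 ≤ v i) →
      γ * nrm (v - vs) ^ 2 ≤ ip (r v - r vs) (v - vs)) :
    ∀ y ∈ Om n m,
      ipT (gOp A B p c r y - gOp A B p c r (xs, lams, vs)) (y - (xs, lams, vs)) ≤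
        -(min α (min β γ)) * nrmT (y - (xs, lams, vs)) ^ 2 := by
  rintro ⟨x, l, v⟩ ⟨h1, h2, h3⟩
  have a1 := hp x h1
  have a2 := hc l h2
  have a3 := hr v h3
  rw [key7, nrmT_sq7]
  rw [nrm_sq7] at a1 a2 a3
  simp only [ipT, Prod.mk_sub_mk]
  have b1 := mul_le_mul_of_nonneg_right (min_le_left α (min β γ)) (ip_self_nonneg7 (x - xs))
  have b2 := mul_le_mul_of_nonneg_right ((min_le_right α (min β γ)).trans (min_le_left β γ))
    (ip_self_nonneg7 (l - lams))
  have b3 := mul_le_mul_of_nonneg_right ((min_le_right α (min β γ)).trans (min_le_right β γ))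
    (ip_self_nonneg7 (v - vs))
  linarith
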